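/- arXiv:0904.3268 — 2 statements merged into one kernel-verified Lean document; each statement's English description precedes it below -/
import Mathlib

section
/- Let X be a Banach space and let A be a (not necessarily closed) subalgebra of B(X) acting non-degenerately on X and possessing a bounded approximate left identity. Then M_l(A) is canonically isometrically isomorphic with the left normalizer N_l(A, B(X)) equipped with the norm from M_l(A) (i.e., T ↦ ‖λ(T)‖ where λ(T) denotes left multiplication by T on A), and M(A) is canonically isometrically isomorphic with N(A, B(X)) equipped with the norm from M(A) (i.e., T ↦ max(‖λ(T)‖, ‖ρ(T)‖)). The isomorphism sends T ∈ N_l(A, B(X)) to the left centralizer a ↦ Ta, respectively T ∈ N(A, B(X)) to the double centralizer (a ↦ Ta, a ↦ aT). -/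
open Filter Topology

/-!
A bounded approximate left identity `e` recovers the operator behind a left centralizer `L`:
`L (e i) (a x) = L (e i * a) x` tends to `L a x`, so the bounded net `L (e i)` converges pointwise
on a set with dense span, hence everywhere, and its limit `T` satisfies `T * a = L a`. By
non-degeneracy an operator is determined by its products `T * a`; cancelling `b` on the right in
`R a * b = a * L b = a * T * b` then identifies the right half of a double centralizer.
-/

section PointwiseLimits

lemma cauchy_map_of_equicontinuousAt_of_mem_closure {ι X α : Type*} [TopologicalSpace X]
    [UniformSpace α] {l : Filter ι} {F : ι → X → α} {s : Set X} {x : X}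
    (hF : EquicontinuousAt F x) (hs : ∀ y ∈ s, Cauchy (l.map (F · y))) (hx : x ∈ closure s) :
    Cauchy (l.map (F · x)) := by
  obtain ⟨y₀, hy₀⟩ := closure_nonempty_iff.1 ⟨x, hx⟩
  have : l.NeBot := (cauchy_map_iff.1 (hs y₀ hy₀)).1
  refine cauchy_map_iff'.2 fun U hU => ?_
  obtain ⟨V, hV, hV_symm, hVU⟩ := comp_comp_symm_mem_uniformity_sets hU
  obtain ⟨y, hFy, hys⟩ := mem_closure_iff_nhds.1 hx _ (hF V hV)
  have hFy_cauchy : ∀ᶠ p in l ×ˢ l, (F p.1 y, F p.2 y) ∈ V := cauchy_map_iff'.1 (hs y hys) hV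
  refine mem_map.2 (hFy_cauchy.mono fun p hp => ?_)
  exact hVU ⟨_, ⟨_, hFy p.1, hp⟩, SetRel.symm V (hFy p.2)⟩

lemma exists_tendsto_of_mem_span {𝕜 ι E F : Type*} [Semiring 𝕜] [AddCommMonoid E] [Module 𝕜 E]
    [AddCommMonoid F] [Module 𝕜 F] [TopologicalSpace F] [ContinuousAdd F]
    [ContinuousConstSMul 𝕜 F] {l : Filter ι} {S : ι → E →ₗ[𝕜] F} {s : Set E}
    (hS : ∀ x ∈ s, ∃ y, Tendsto (S · x) l (𝓝 y)) {x : E} (hx : x ∈ Submodule.span 𝕜 s) :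
    ∃ y, Tendsto (S · x) l (𝓝 y) := by
  induction hx using Submodule.span_induction with
  | mem x hx => exact hS x hx
  | zero => exact ⟨0, by simpa only [map_zero] using tendsto_const_nhds⟩
  | add x₁ x₂ _ _ h₁ h₂ =>
    obtain ⟨y₁, hy₁⟩ := h₁
    obtain ⟨y₂, hy₂⟩ := h₂
    exact ⟨y₁ + y₂, by simpa only [map_add] using hy₁.add hy₂⟩
  | smul c x _ h =>
    obtain ⟨y, hy⟩ := h
    exact ⟨c • y, by simpa only [map_smul] using hy.const_smul c⟩

lemma exists_continuousLinearMap_tendsto_of_dense_span {𝕜 ι E F : Type*}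
    [NontriviallyNormedField 𝕜] [SeminormedAddCommGroup E] [NormedSpace 𝕜 E]
    [NormedAddCommGroup F] [NormedSpace 𝕜 F] [CompleteSpace F] {l : Filter ι} [l.NeBot]
    {S : ι → E →L[𝕜] F} (hS_bdd : Bornology.IsBounded (Set.range S)) {s : Set E}
    (hs : Dense (Submodule.span 𝕜 s : Set E)) (hS : ∀ x ∈ s, ∃ y, Tendsto (S · x) l (𝓝 y)) :
    ∃ T : E →L[𝕜] F, ∀ x, Tendsto (S · x) l (𝓝 (T x)) := by
  have hS_equi : Equicontinuous fun i => (S i : E → F) :=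
    ((NormedSpace.equicontinuous_TFAE S).out 5 1).1 <| by
      simpa only [Set.forall_mem_range] using isBounded_iff_forall_norm_le.1 hS_bdd
  have hS_span : ∀ x ∈ Submodule.span 𝕜 s, Cauchy (l.map (S · x)) := fun x hx =>
    cauchy_map_iff_exists_tendsto.2 <|
      exists_tendsto_of_mem_span (S := fun i => (S i : E →ₗ[𝕜] F)) hS hx
  have hS_lim : ∀ x, ∃ y, Tendsto (S · x) l (𝓝 y) := fun x =>
    cauchy_map_iff_exists_tendsto.1 <|
      cauchy_map_of_equicontinuousAt_of_mem_closure (hS_equi x) hS_span (hs x)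
  choose f hf using hS_lim
  exact ⟨.ofTendstoOfBoundedRange f S (tendsto_pi_nhds.2 hf) hS_bdd, hf⟩

end PointwiseLimits

section Restrict

variable {𝕜 B : Type*} [CommSemiring 𝕜] [TopologicalSpace B]

section Definitions

variable [NonUnitalNonAssocSemiring B] [Module 𝕜 B] [ContinuousMul B]
  {A : NonUnitalSubalgebra 𝕜 B} {T : B}

/-- Left multiplication `λ(T)` on `A` by an element `T` of the left normalizer of `A`. -/
def leftMulRestrict [SMulCommClass 𝕜 B B] (hT : ∀ a : A, T * (a : B) ∈ A) : A →L[𝕜] A where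
  toFun a := ⟨T * a, hT a⟩
  map_add' a b := Subtype.ext (mul_add T (a : B) b)
  map_smul' c a := Subtype.ext (mul_smul_comm c T (a : B))
  cont := by fun_prop

/-- Right multiplication `ρ(T)` on `A` by an element `T` of the right normalizer of `A`. -/
def rightMulRestrict [IsScalarTower 𝕜 B B] (hT : ∀ a : A, (a : B) * T ∈ A) : A →L[𝕜] A where
  toFun a := ⟨a * T, hT a⟩
  map_add' a b := Subtype.ext (add_mul (a : B) b T)
  map_smul' c a := Subtype.ext (smul_mul_assoc c (a : B) T)
  cont := by fun_prop

end Definitions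

variable [NonUnitalSemiring B] [Module 𝕜 B] [ContinuousMul B]
  {A : NonUnitalSubalgebra 𝕜 B} {T : B}

lemma leftMulRestrict_mul [SMulCommClass 𝕜 B B] (hT : ∀ a : A, T * (a : B) ∈ A) (a b : A) :
    leftMulRestrict hT (a * b) = leftMulRestrict hT a * b :=
  Subtype.ext (mul_assoc T (a : B) b).symm

lemma rightMulRestrict_mul [IsScalarTower 𝕜 B B] (hT : ∀ a : A, (a : B) * T ∈ A) (a b : A) :
    rightMulRestrict hT (a * b) = a * rightMulRestrict hT b :=
  Subtype.ext (mul_assoc (a : B) b T)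

lemma mul_leftMulRestrict_eq_rightMulRestrict_mul [SMulCommClass 𝕜 B B] [IsScalarTower 𝕜 B B]
    (hl : ∀ a : A, T * (a : B) ∈ A) (hr : ∀ a : A, (a : B) * T ∈ A) (a b : A) :
    a * leftMulRestrict hl b = rightMulRestrict hr a * b :=
  Subtype.ext (mul_assoc (a : B) T b).symm

end Restrict

lemma eq_of_forall_comp_eq_of_dense_span {𝕜 α E F G : Type*} [Semiring 𝕜]
    [AddCommMonoid E] [Module 𝕜 E] [TopologicalSpace E]
    [AddCommMonoid F] [Module 𝕜 F] [TopologicalSpace F]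
    [AddCommMonoid G] [Module 𝕜 G] [TopologicalSpace G] [T2Space G] {a : α → E →L[𝕜] F}
    (ha : Dense (Submodule.span 𝕜 (Set.range fun p : α × E => a p.1 p.2) : Set F))
    {T T' : F →L[𝕜] G} (h : ∀ i, T ∘L a i = T' ∘L a i) : T = T' := by
  refine ContinuousLinearMap.ext_on ha ?_
  rintro _ ⟨⟨i, x⟩, rfl⟩
  exact DFunLike.congr_fun (h i) x

section RightModuleMaps

variable {𝕜 X Y ι : Type*} [NontriviallyNormedField 𝕜] [SeminormedAddCommGroup X]
  [NormedSpace 𝕜 X] [NormedAddCommGroup Y] [NormedSpace 𝕜 Y] {A : NonUnitalSubalgebra 𝕜 (X →L[𝕜] X)}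

lemma tendsto_apply_apply_of_map_mul {l : Filter ι} {e : ι → A}
    (he : ∀ a : A, Tendsto (fun i => e i * a) l (𝓝 a)) {L : A →L[𝕜] X →L[𝕜] Y}
    (hL : ∀ a b : A, L (a * b) = L a ∘L (b : X →L[𝕜] X)) (a : A) (x : X) :
    Tendsto (fun i => L (e i) ((a : X →L[𝕜] X) x)) l (𝓝 (L a x)) := by
  have hLx : Continuous fun b => L b x := by fun_prop
  simpa only [Function.comp_def, hL, ContinuousLinearMap.comp_apply]
    using (hLx.tendsto a).comp (he a)

lemma exists_eq_comp_of_map_mul [CompleteSpace Y]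
    (hA : Dense (Submodule.span 𝕜
      (Set.range fun p : A × X => (p.1 : X →L[𝕜] X) p.2) : Set X))
    {l : Filter ι} [l.NeBot] {e : ι → A} (he_bdd : Bornology.IsBounded (Set.range e))
    (he : ∀ a : A, Tendsto (fun i => e i * a) l (𝓝 a)) {L : A →L[𝕜] X →L[𝕜] Y}
    (hL : ∀ a b : A, L (a * b) = L a ∘L (b : X →L[𝕜] X)) :
    ∃ T : X →L[𝕜] Y, ∀ a : A, L a = T ∘L (a : X →L[𝕜] X) := by
  have hLe_lim := tendsto_apply_apply_of_map_mul he hL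
  have hLe_bdd : Bornology.IsBounded (Set.range (L ∘ e)) := by
    let _ : NormedSpace 𝕜 A := A.toSubmodule.normedSpace
    exact Set.range_comp L e ▸ he_bdd.image L
  obtain ⟨T, hT⟩ := exists_continuousLinearMap_tendsto_of_dense_span hLe_bdd hA
    (Set.forall_mem_range.2 fun p => ⟨_, hLe_lim p.1 p.2⟩)
  exact ⟨T, fun a => ContinuousLinearMap.ext fun x => tendsto_nhds_unique (hLe_lim a x) (hT _)⟩

end RightModuleMaps

section Centralizers

variable {𝕜 X : Type*} [NontriviallyNormedField 𝕜] [NormedAddCommGroup X] [NormedSpace 𝕜 X]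
  {A : NonUnitalSubalgebra 𝕜 (X →L[𝕜] X)}

lemma exists_eq_mul_of_map_mul {ι : Type*} [CompleteSpace X]
    (hA : Dense (Submodule.span 𝕜
      (Set.range fun p : A × X => (p.1 : X →L[𝕜] X) p.2) : Set X))
    {l : Filter ι} [l.NeBot] {e : ι → A} (he_bdd : Bornology.IsBounded (Set.range e))
    (he : ∀ a : A, Tendsto (fun i => e i * a) l (𝓝 a)) {L : A →L[𝕜] A}
    (hL : ∀ a b : A, L (a * b) = L a * b) :
    ∃ T : X →L[𝕜] X, ∀ a : A, (L a : X →L[𝕜] X) = T * (a : X →L[𝕜] X) :=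
  exists_eq_comp_of_map_mul hA he_bdd he (L := A.toSubmodule.subtypeL ∘L L)
    fun a b => congrArg Subtype.val (hL a b)

lemma coe_eq_mul_of_mul_eq_mul
    (hA : Dense (Submodule.span 𝕜
      (Set.range fun p : A × X => (p.1 : X →L[𝕜] X) p.2) : Set X))
    {L R : A → A} (hLR : ∀ a b : A, a * L b = R a * b) {T : X →L[𝕜] X}
    (hT : ∀ a : A, (L a : X →L[𝕜] X) = T * (a : X →L[𝕜] X)) (a : A) :
    (R a : X →L[𝕜] X) = (a : X →L[𝕜] X) * T :=
  eq_of_forall_comp_eq_of_dense_span hA fun b =>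
    calc (R a * b : X →L[𝕜] X)
        = a * L b := congrArg Subtype.val (hLR a b).symm
      _ = a * T * b := by rw [hT, mul_assoc]

end Centralizers

theorem operator_algebra_centralizers_isometric_general
    {𝕜 : Type*} [NontriviallyNormedField 𝕜]
    {X : Type*} [NormedAddCommGroup X] [NormedSpace 𝕜 X] [CompleteSpace X]
    (A : NonUnitalSubalgebra 𝕜 (X →L[𝕜] X))
    (hnd : Dense (Submodule.span 𝕜
      (Set.range fun p : A × X => (p.1 : X →L[𝕜] X) p.2) : Set X))
    (m : ℝ) {ι : Type*} (l : Filter ι) [l.NeBot] (e : ι → A)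
    (he_bdd : ∀ i, ‖(e i : X →L[𝕜] X)‖ ≤ m)
    (he_lim : ∀ a : A, Tendsto (fun i => (e i : X →L[𝕜] X) * (a : X →L[𝕜] X)) l
      (𝓝 (a : X →L[𝕜] X))) :
    (∀ T : X →L[𝕜] X, (∀ a : A, T * (a : X →L[𝕜] X) ∈ A) →
      ∃ L : A →L[𝕜] A, (∀ a b : A, L (a * b) = L a * b) ∧
        ∀ a : A, (L a : X →L[𝕜] X) = T * (a : X →L[𝕜] X)) ∧
    (∀ T T' : X →L[𝕜] X,
      (∀ a : A, T * (a : X →L[𝕜] X) = T' * (a : X →L[𝕜] X)) → T = T') ∧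
    (∀ L : A →L[𝕜] A, (∀ a b : A, L (a * b) = L a * b) →
      ∃ T : X →L[𝕜] X, (∀ a : A, T * (a : X →L[𝕜] X) ∈ A) ∧
        ∀ a : A, (L a : X →L[𝕜] X) = T * (a : X →L[𝕜] X)) ∧
    (∀ T : X →L[𝕜] X,
      (∀ a : A, T * (a : X →L[𝕜] X) ∈ A ∧ (a : X →L[𝕜] X) * T ∈ A) →
      ∃ L R : A →L[𝕜] A,
        (∀ a b : A, L (a * b) = L a * b) ∧
        (∀ a b : A, R (a * b) = a * R b) ∧
        (∀ a b : A, a * L b = R a * b) ∧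
        (∀ a : A, (L a : X →L[𝕜] X) = T * (a : X →L[𝕜] X)) ∧
        (∀ a : A, (R a : X →L[𝕜] X) = (a : X →L[𝕜] X) * T)) ∧
    (∀ L R : A →L[𝕜] A,
      (∀ a b : A, L (a * b) = L a * b) →
      (∀ a b : A, a * L b = R a * b) →
      ∃ T : X →L[𝕜] X,
        (∀ a : A, T * (a : X →L[𝕜] X) ∈ A ∧ (a : X →L[𝕜] X) * T ∈ A) ∧
        (∀ a : A, (L a : X →L[𝕜] X) = T * (a : X →L[𝕜] X)) ∧
        (∀ a : A, (R a : X →L[𝕜] X) = (a : X →L[𝕜] X) * T)) := by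
  have he_range : Bornology.IsBounded (Set.range e) :=
    isBounded_iff_forall_norm_le.2 ⟨m, Set.forall_mem_range.2 he_bdd⟩
  have he_left (a : A) : Tendsto (fun i => e i * a) l (𝓝 a) := tendsto_subtype_rng.2 (he_lim a)
  refine ⟨fun T hT => ?_, fun T T' => eq_of_forall_comp_eq_of_dense_span hnd, fun L hL => ?_,
    fun T hT => ?_, fun L R hL hLR => ?_⟩
  · exact ⟨leftMulRestrict hT, leftMulRestrict_mul hT, fun _ => rfl⟩
  · obtain ⟨T, hT⟩ := exists_eq_mul_of_map_mul hnd he_range he_left hL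
    exact ⟨T, fun a => hT a ▸ (L a).2, hT⟩
  · have hl (a : A) := (hT a).1
    have hr (a : A) := (hT a).2
    exact ⟨leftMulRestrict hl, rightMulRestrict hr, leftMulRestrict_mul hl,
      rightMulRestrict_mul hr, mul_leftMulRestrict_eq_rightMulRestrict_mul hl hr,
      fun _ => rfl, fun _ => rfl⟩
  · obtain ⟨T, hT⟩ := exists_eq_mul_of_map_mul hnd he_range he_left hL
    have hR := coe_eq_mul_of_mul_eq_mul hnd hLR hT
    exact ⟨T, fun a => ⟨hT a ▸ (L a).2, hR a ▸ (R a).2⟩, hT, hR⟩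

/-- **Centralizer algebras of a non-degenerately acting operator algebra.** Let `X` be a
Banach space and `A` a (not necessarily closed) subalgebra of `B(X)` acting non-degenerately
on `X` and possessing a bounded approximate left identity. Then `M_l(A)` is canonically
isometrically isomorphic with the left normalizer `N_l(A, B(X))` (with the norm from
`M_l(A)`), via `T ↦ (a ↦ Ta)`, and `M(A)` is canonically isometrically isomorphic with
`N(A, B(X))` (with the norm from `M(A)`), via `T ↦ (a ↦ Ta, a ↦ aT)`. -/
theorem operator_algebra_centralizers_isometric
    {𝕜 : Type*} [RCLike 𝕜]
    {X : Type*} [NormedAddCommGroup X] [NormedSpace 𝕜 X] [CompleteSpace X]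
    (A : NonUnitalSubalgebra 𝕜 (X →L[𝕜] X))
    (hnd : Dense (Submodule.span 𝕜
      (Set.range fun p : A × X => (p.1 : X →L[𝕜] X) p.2) : Set X))
    (m : ℝ) {ι : Type*} (l : Filter ι) [l.NeBot] (e : ι → A)
    (he_bdd : ∀ i, ‖(e i : X →L[𝕜] X)‖ ≤ m)
    (he_lim : ∀ a : A, Tendsto (fun i => (e i : X →L[𝕜] X) * (a : X →L[𝕜] X)) l
      (𝓝 (a : X →L[𝕜] X))) :
    -- every `T ∈ N_l(A, B(X))` induces a left centralizer `a ↦ Ta` of `A` ...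
    (∀ T : X →L[𝕜] X, (∀ a : A, T * (a : X →L[𝕜] X) ∈ A) →
      ∃ L : A →L[𝕜] A, (∀ a b : A, L (a * b) = L a * b) ∧
        ∀ a : A, (L a : X →L[𝕜] X) = T * (a : X →L[𝕜] X)) ∧
    -- ... the induced map `N_l(A, B(X)) → M_l(A)` is injective ...
    (∀ T T' : X →L[𝕜] X, (∀ a : A, T * (a : X →L[𝕜] X) ∈ A) →
      (∀ a : A, T' * (a : X →L[𝕜] X) ∈ A) →
      (∀ a : A, T * (a : X →L[𝕜] X) = T' * (a : X →L[𝕜] X)) → T = T') ∧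
    -- ... and onto `M_l(A)`:
    (∀ L : A →L[𝕜] A, (∀ a b : A, L (a * b) = L a * b) →
      ∃ T : X →L[𝕜] X, (∀ a : A, T * (a : X →L[𝕜] X) ∈ A) ∧
        ∀ a : A, (L a : X →L[𝕜] X) = T * (a : X →L[𝕜] X)) ∧
    -- every `T ∈ N(A, B(X))` induces a double centralizer `(a ↦ Ta, a ↦ aT)` of `A` ...
    (∀ T : X →L[𝕜] X,
      (∀ a : A, T * (a : X →L[𝕜] X) ∈ A ∧ (a : X →L[𝕜] X) * T ∈ A) →
      ∃ L R : A →L[𝕜] A,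
        (∀ a b : A, L (a * b) = L a * b) ∧
        (∀ a b : A, R (a * b) = a * R b) ∧
        (∀ a b : A, a * L b = R a * b) ∧
        (∀ a : A, (L a : X →L[𝕜] X) = T * (a : X →L[𝕜] X)) ∧
        (∀ a : A, (R a : X →L[𝕜] X) = (a : X →L[𝕜] X) * T)) ∧
    -- ... and this map is onto the set of double centralizers of `A`:
    (∀ L R : A →L[𝕜] A,
      (∀ a b : A, L (a * b) = L a * b) →
      (∀ a b : A, R (a * b) = a * R b) →
      (∀ a b : A, a * L b = R a * b) →
      ∃ T : X →L[𝕜] X,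
        (∀ a : A, T * (a : X →L[𝕜] X) ∈ A ∧ (a : X →L[𝕜] X) * T ∈ A) ∧
        (∀ a : A, (L a : X →L[𝕜] X) = T * (a : X →L[𝕜] X)) ∧
        (∀ a : A, (R a : X →L[𝕜] X) = (a : X →L[𝕜] X) * T)) := by
  obtain ⟨hl, hinj, hsurj, hd, hdsurj⟩ :=
    operator_algebra_centralizers_isometric_general A hnd m l e he_bdd he_lim
  exact ⟨hl, fun T T' _ _ => hinj T T', hsurj, hd, fun L R hL _ => hdsurj L R hL⟩
end

section
/- Let A be a normed algebra with an m-bounded approximate right identity, let X be a Banach space, and let π_r : A → B(X) be an injective bounded algebra anti-homomorphism making X a non-degenerate faithful normed right A-module, such that π_r^{-1} : π_r(A) → A is bounded. Then the unique homomorphism π̄_r : M_r(A) → B(X) with π̄_r ∘ ρ = π_r is an algebra ISOMORPHISM from the right centralizer algebra M_r(A) onto the LEFT normalizer N_l(π_r(A), B(X)), with ‖π̄_r‖ ≤ m‖π_r‖ and ‖π̄_r^{-1}‖ ≤ ‖π_r‖·‖π_r^{-1}‖ when N_l(π_r(A), B(X)) carries the operator norm of B(X); and π̄_r ∘ φ_r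 : M(A) → B(X) is a bounded algebra ANTI-isomorphism from M(A) onto N(π_r(A), B(X)), with ‖π̄_r ∘ φ_r‖ ≤ m‖π_r‖ and ‖(π̄_r ∘ φ_r)^{-1}‖ ≤ ‖π_r‖·‖π_r^{-1}‖. -/
open Filter Topology

/-- The left centralizer algebra `M_l(A)`. -/
def LeftCentralizers (𝕜 : Type*) (A : Type*) [RCLike 𝕜] [NonUnitalNormedRing A]
    [NormedSpace 𝕜 A] [IsScalarTower 𝕜 A A] [SMulCommClass 𝕜 A A] :
    Set (A →L[𝕜] A) :=
  {L | ∀ a b : A, L (a * b) = L a * b}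

/-- The right centralizer algebra `M_r(A)`. -/
def RightCentralizers (𝕜 : Type*) (A : Type*) [RCLike 𝕜] [NonUnitalNormedRing A]
    [NormedSpace 𝕜 A] [IsScalarTower 𝕜 A A] [SMulCommClass 𝕜 A A] :
    Set (A →L[𝕜] A) :=
  {R | ∀ a b : A, R (a * b) = a * R b}

/-- `(L, R)` is a double centralizer of `A`. -/
def IsDoubleCentralizer (𝕜 : Type*) {A : Type*} [RCLike 𝕜] [NonUnitalNormedRing A]
    [NormedSpace 𝕜 A] [IsScalarTower 𝕜 A A] [SMulCommClass 𝕜 A A]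
    (L R : A →L[𝕜] A) : Prop :=
  L ∈ LeftCentralizers 𝕜 A ∧ R ∈ RightCentralizers 𝕜 A ∧ ∀ a b : A, a * L b = R a * b

/-!
The relation `T * π a = π (R a)` determines each of `T` and `R` from the other: `R` because `π` is
injective, `T` because `π` is non-degenerate. It holds for `T = π̄_r R` since
`R ∘ ρ a = ρ (R a)`. Given `T` in the left normalizer, `R := π⁻¹ ∘ (T * ·) ∘ π` is a bounded right
centralizer, and `L := π⁻¹ ∘ (· * T) ∘ π` completes it to a double centralizer when `T` also
normalizes from the right. Finally `π (e i) → 1` strongly, so `T` is the strong limit of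
`T * π (e i) = π (R (e i))`, which has norm at most `m * ‖π‖ * ‖R‖`.
-/

section BoundedBelow

variable {𝕜 E F G : Type*} [NontriviallyNormedField 𝕜] [NormedAddCommGroup E] [NormedSpace 𝕜 E]
  [SeminormedAddCommGroup F] [NormedSpace 𝕜 F] [SeminormedAddCommGroup G] [NormedSpace 𝕜 G]
  {f : E →L[𝕜] F} {C : ℝ}

lemma antilipschitzWith_toNNReal_of_norm_le (hC : ∀ x, ‖x‖ ≤ C * ‖f x‖) :
    AntilipschitzWith C.toNNReal f :=
  f.antilipschitz_of_bound fun x =>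
    (hC x).trans <| mul_le_mul_of_nonneg_right (Real.le_coe_toNNReal C) (norm_nonneg _)

lemma exists_clm_lift_of_antilipschitzWith {K : NNReal} (hf : AntilipschitzWith K f)
    (g : G →L[𝕜] F) (hg : ∀ y, ∃ x, g y = f x) :
    ∃ h : G →L[𝕜] E, ∀ y, f (h y) = g y := by
  let h : G →ₗ[𝕜] E := (LinearEquiv.ofInjective (f : E →ₗ[𝕜] F) hf.injective).symm ∘ₗ
    (g : G →ₗ[𝕜] F).codRestrict (f : E →ₗ[𝕜] F).range fun y => (hg y).imp fun _ hx => hx.symm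
  have map_h (y : G) : f (h y) = g y :=
    congrArg Subtype.val ((LinearEquiv.ofInjective (f : E →ₗ[𝕜] F) hf.injective).apply_symm_apply _)
  have continuous_h : Continuous h :=
    (hf.isInducing f.continuous).continuous_iff.2 (g.continuous.congr fun y => (map_h y).symm)
  exact ⟨⟨h, continuous_h⟩, map_h⟩

lemma opNorm_le_of_norm_map_le (hC : ∀ x, ‖x‖ ≤ C * ‖f x‖) {R : E →L[𝕜] E} {t : ℝ} (ht : 0 ≤ t)
    (hR : ∀ x, ‖f (R x)‖ ≤ t * ‖f x‖) : ‖R‖ ≤ ‖f‖ * C * t := by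
  -- A negative `C` is possible, but only when `E` is trivial.
  cases subsingleton_or_nontrivial E with
  | inl _ => simp
  | inr _ =>
    obtain ⟨x₀, hx₀⟩ := exists_ne (0 : E)
    have C_pos : 0 < C :=
      pos_of_mul_pos_left ((norm_pos_iff.2 hx₀).trans_le (hC x₀)) (norm_nonneg _)
    refine R.opNorm_le_bound (by positivity) fun x => ?_
    calc ‖R x‖ ≤ C * ‖f (R x)‖ := hC _
      _ ≤ C * (t * (‖f‖ * ‖x‖)) := by gcongr; exact (hR x).trans (by gcongr; exact f.le_opNorm x)
      _ = ‖f‖ * C * t * ‖x‖ := by ring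

end BoundedBelow

section NormedRing

variable {𝕜 A B : Type*} [NontriviallyNormedField 𝕜] [NormedAddCommGroup A] [NormedSpace 𝕜 A]
  [NonUnitalSeminormedRing B] [NormedSpace 𝕜 B] {π : A →L[𝕜] B} {C : ℝ} {T : B}

lemma opNorm_le_of_map_eq_mul_left (hC : ∀ a, ‖a‖ ≤ C * ‖π a‖) {R : A →L[𝕜] A}
    (hR : ∀ a, π (R a) = T * π a) : ‖R‖ ≤ ‖π‖ * C * ‖T‖ :=
  opNorm_le_of_norm_map_le hC (norm_nonneg T) fun a => hR a ▸ norm_mul_le _ _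

lemma opNorm_le_of_map_eq_mul_right (hC : ∀ a, ‖a‖ ≤ C * ‖π a‖) {L : A →L[𝕜] A}
    (hL : ∀ a, π (L a) = π a * T) : ‖L‖ ≤ ‖π‖ * C * ‖T‖ :=
  opNorm_le_of_norm_map_le hC (norm_nonneg T) fun a =>
    hL a ▸ (norm_mul_le _ _).trans_eq (mul_comm _ _)

variable [IsScalarTower 𝕜 B B] [SMulCommClass 𝕜 B B] {K : NNReal}

lemma exists_clm_map_eq_mul_left (hπ : AntilipschitzWith K π)
    (hT : ∀ a, ∃ b, T * π a = π b) : ∃ R : A →L[𝕜] A, ∀ a, π (R a) = T * π a :=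
  exists_clm_lift_of_antilipschitzWith hπ (ContinuousLinearMap.mul 𝕜 B T ∘L π) hT

lemma exists_clm_map_eq_mul_right (hπ : AntilipschitzWith K π)
    (hT : ∀ a, ∃ b, π a * T = π b) : ∃ L : A →L[𝕜] A, ∀ a, π (L a) = π a * T :=
  exists_clm_lift_of_antilipschitzWith hπ ((ContinuousLinearMap.mul 𝕜 B).flip T ∘L π) hT

end NormedRing

section Nondegenerate

lemma clm_ext_of_comp_eq {𝕜 A X Y Z : Type*} [Semiring 𝕜] [AddCommMonoid X] [Module 𝕜 X]
    [TopologicalSpace X] [AddCommMonoid Y] [Module 𝕜 Y] [TopologicalSpace Y] [AddCommMonoid Z]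
    [Module 𝕜 Z] [TopologicalSpace Z] [T2Space Z] {π : A → X →L[𝕜] Y}
    (hnd : Dense (Submodule.span 𝕜 (Set.range fun p : A × X => π p.1 p.2) : Set Y))
    {S T : Y →L[𝕜] Z} (h : ∀ a, S ∘L π a = T ∘L π a) : S = T := by
  refine ContinuousLinearMap.ext_on hnd ?_
  rintro _ ⟨⟨a, x⟩, rfl⟩
  exact DFunLike.congr_fun (h a) x

variable {𝕜 X Y ι : Type*} [NontriviallyNormedField 𝕜] [SeminormedAddCommGroup X]
  [NormedSpace 𝕜 X] {l : Filter ι} {m : ℝ}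

lemma tendsto_clm_apply_of_dense_span [SeminormedAddCommGroup Y] [NormedSpace 𝕜 Y]
    {f : ι → X →L[𝕜] Y} {g : X →L[𝕜] Y} {s : Set X} (hs : Dense (Submodule.span 𝕜 s : Set X))
    (hf : ∀ i, ‖f i‖ ≤ m) (hfg : ∀ x ∈ s, Tendsto (fun i => f i x) l (𝓝 (g x))) (x : X) :
    Tendsto (fun i => f i x) l (𝓝 (g x)) := by
  have equicontinuous_f : Equicontinuous fun i x => f i x :=
    ((NormedSpace.equicontinuous_TFAE f).out 1 5 :).2 ⟨m, hf⟩
  have tendsto_of_mem_span :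
      (Submodule.span 𝕜 s : Set X) ⊆ {x | Tendsto (fun i => f i x) l (𝓝 (g x))} := by
    intro x hx
    induction hx using Submodule.span_induction with
    | mem x hx => exact hfg x hx
    | zero => simpa using tendsto_const_nhds
    | add x y _ _ hx hy => simpa using hx.add hy
    | smul c x _ hx => simpa using hx.const_smul c
  exact closure_minimal tendsto_of_mem_span
    (equicontinuous_f.isClosed_setOfPred_tendsto g.continuous) (hs x)

variable {A : Type*} [NonUnitalSeminormedRing A] [NormedSpace 𝕜 A] {e : ι → A}
  {π : A →L[𝕜] X →L[𝕜] X}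

lemma tendsto_map_approx_right_identity_apply (he_bdd : ∀ i, ‖e i‖ ≤ m)
    (he_lim : ∀ a, Tendsto (fun i => a * e i) l (𝓝 a))
    (hπmul : ∀ a b, π (a * b) = π b * π a)
    (hnd : Dense (Submodule.span 𝕜 (Set.range fun p : A × X => π p.1 p.2) : Set X)) (x : X) :
    Tendsto (fun i => π (e i) x) l (𝓝 x) := by
  refine tendsto_clm_apply_of_dense_span (g := .id 𝕜 X) hnd (m := ‖π‖ * m)
    (fun i => π.le_opNorm_of_le (he_bdd i)) ?_ x
  rintro _ ⟨⟨a, y⟩, rfl⟩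
  have tendsto_map_mul : Tendsto (fun i => π (a * e i) y) l (𝓝 (π a y)) :=
    ((π.flip y).continuous.tendsto a).comp (he_lim a)
  simpa [hπmul] using tendsto_map_mul

lemma opNorm_le_of_mul_map_eq_map [l.NeBot] (he_bdd : ∀ i, ‖e i‖ ≤ m)
    (he_lim : ∀ a, Tendsto (fun i => a * e i) l (𝓝 a))
    (hπmul : ∀ a b, π (a * b) = π b * π a)
    (hnd : Dense (Submodule.span 𝕜 (Set.range fun p : A × X => π p.1 p.2) : Set X))
    {R : A →L[𝕜] A} {T : X →L[𝕜] X} (hT : ∀ a, T * π a = π (R a)) :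
    ‖T‖ ≤ m * ‖π‖ * ‖R‖ := by
  have m_nonneg : 0 ≤ m := (norm_nonneg _).trans (he_bdd l.nonempty_of_neBot.some)
  refine T.opNorm_le_bound (by positivity) fun x => ?_
  have tendsto_T : Tendsto (fun i => T (π (e i) x)) l (𝓝 (T x)) :=
    (T.continuous.tendsto x).comp
      (tendsto_map_approx_right_identity_apply he_bdd he_lim hπmul hnd x)
  refine le_of_tendsto tendsto_T.norm (.of_forall fun i => ?_)
  calc ‖T (π (e i) x)‖ = ‖π (R (e i)) x‖ := congrArg norm (DFunLike.congr_fun (hT (e i)) x)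
    _ ≤ ‖π‖ * (‖R‖ * m) * ‖x‖ :=
      (π (R (e i))).le_of_opNorm_le (π.le_opNorm_of_le (R.le_opNorm_of_le (he_bdd i))) x
    _ = m * ‖π‖ * ‖R‖ * ‖x‖ := by ring

end Nondegenerate

section Centralizers

variable {𝕜 A B : Type*} [RCLike 𝕜] [NonUnitalNormedRing A] [NormedSpace 𝕜 A]
  [IsScalarTower 𝕜 A A] [SMulCommClass 𝕜 A A] {L R : A →L[𝕜] A}

lemma flip_mul_mem_rightCentralizers (a : A) :
    (ContinuousLinearMap.mul 𝕜 A).flip a ∈ RightCentralizers 𝕜 A :=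
  fun b c => mul_assoc b c a

lemma mul_flip_mul_of_mem_rightCentralizers (hR : R ∈ RightCentralizers 𝕜 A) (a : A) :
    R * (ContinuousLinearMap.mul 𝕜 A).flip a = (ContinuousLinearMap.mul 𝕜 A).flip (R a) :=
  ContinuousLinearMap.ext fun b => hR b a

lemma mul_map_eq_map_of_extends_flip_mul [Mul B] {π : A → B} {σ : RightCentralizers 𝕜 A → B}
    (hσ_mul : ∀ (R S : RightCentralizers 𝕜 A)
      (h : (R : A →L[𝕜] A) * S ∈ RightCentralizers 𝕜 A), σ ⟨R * S, h⟩ = σ R * σ S)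
    (hσ_flip_mul : ∀ (a : A)
      (h : (ContinuousLinearMap.mul 𝕜 A).flip a ∈ RightCentralizers 𝕜 A), σ ⟨_, h⟩ = π a)
    (R : RightCentralizers 𝕜 A) (a : A) : σ R * π a = π ((R : A →L[𝕜] A) a) := by
  have mul_flip := mul_flip_mul_of_mem_rightCentralizers R.2 a
  have mul_flip_mem := mul_flip ▸ flip_mul_mem_rightCentralizers (𝕜 := 𝕜) ((R : A →L[𝕜] A) a)
  calc σ R * π a = σ R * σ ⟨_, flip_mul_mem_rightCentralizers a⟩ := by rw [hσ_flip_mul]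
    _ = σ ⟨_, mul_flip_mem⟩ := (hσ_mul R ⟨_, flip_mul_mem_rightCentralizers a⟩ mul_flip_mem).symm
    _ = σ ⟨_, flip_mul_mem_rightCentralizers _⟩ := congrArg σ (Subtype.ext mul_flip)
    _ = π ((R : A →L[𝕜] A) a) := hσ_flip_mul _ _

section Semigroup

variable [Semigroup B] {π : A → B} {T : B}

lemma mem_rightCentralizers_of_map_eq_mul (hπinj : Function.Injective π)
    (hπmul : ∀ a b, π (a * b) = π b * π a) (hR : ∀ a, π (R a) = T * π a) :
    R ∈ RightCentralizers 𝕜 A :=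
  fun a b => hπinj (by rw [hR, hπmul, hπmul, hR, mul_assoc])

lemma mem_leftCentralizers_of_map_eq_mul (hπinj : Function.Injective π)
    (hπmul : ∀ a b, π (a * b) = π b * π a) (hL : ∀ a, π (L a) = π a * T) :
    L ∈ LeftCentralizers 𝕜 A :=
  fun a b => hπinj (by rw [hL, hπmul, hπmul, hL, mul_assoc])

lemma isDoubleCentralizer_of_map_eq_mul (hπinj : Function.Injective π)
    (hπmul : ∀ a b, π (a * b) = π b * π a) (hL : ∀ a, π (L a) = π a * T)
    (hR : ∀ a, π (R a) = T * π a) : IsDoubleCentralizer 𝕜 L R :=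
  ⟨mem_leftCentralizers_of_map_eq_mul hπinj hπmul hL,
    mem_rightCentralizers_of_map_eq_mul hπinj hπmul hR,
    fun a b => hπinj (by rw [hπmul, hπmul, hL, hR, mul_assoc])⟩

end Semigroup

section SeminormedRing

variable [NonUnitalSeminormedRing B] [NormedSpace 𝕜 B] [IsScalarTower 𝕜 B B]
  [SMulCommClass 𝕜 B B] {π : A →L[𝕜] B} {K : NNReal} {T : B}

lemma exists_mem_rightCentralizers_map_eq_mul
    (hπ : AntilipschitzWith K π) (hπmul : ∀ a b, π (a * b) = π b * π a)
    (hT : ∀ a, ∃ b, T * π a = π b) :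
    ∃ R ∈ RightCentralizers 𝕜 A, ∀ a, π (R a) = T * π a :=
  (exists_clm_map_eq_mul_left hπ hT).imp fun _ hR =>
    ⟨mem_rightCentralizers_of_map_eq_mul hπ.injective hπmul hR, hR⟩

lemma exists_isDoubleCentralizer_map_eq_mul
    (hπ : AntilipschitzWith K π) (hπmul : ∀ a b, π (a * b) = π b * π a)
    (hT : ∀ a, (∃ b, T * π a = π b) ∧ ∃ b, π a * T = π b) :
    ∃ L R : A →L[𝕜] A, IsDoubleCentralizer 𝕜 L R ∧
      (∀ a, π (R a) = T * π a) ∧ ∀ a, π (L a) = π a * T := by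
  obtain ⟨R, hR⟩ := exists_clm_map_eq_mul_left hπ fun a => (hT a).1
  obtain ⟨L, hL⟩ := exists_clm_map_eq_mul_right hπ fun a => (hT a).2
  exact ⟨L, R, isDoubleCentralizer_of_map_eq_mul hπ.injective hπmul hL hR, hR, hL⟩

end SeminormedRing

lemma map_mul_eq_map_of_isDoubleCentralizer {X : Type*} [AddCommMonoid X] [Module 𝕜 X]
    [TopologicalSpace X] [T2Space X] {π : A → X →L[𝕜] X} {T : X →L[𝕜] X}
    (hπmul : ∀ a b, π (a * b) = π b * π a)
    (hnd : Dense (Submodule.span 𝕜 (Set.range fun p : A × X => π p.1 p.2) : Set X))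
    (hLR : IsDoubleCentralizer 𝕜 L R) (hT : ∀ a, T * π a = π (R a)) (a : A) :
    π a * T = π (L a) :=
  clm_ext_of_comp_eq hnd fun b =>
    calc π a * T * π b = π a * π (R b) := by rw [mul_assoc, hT]
      _ = π (b * L a) := by rw [← hπmul, hLR.2.2]
      _ = π (L a) * π b := hπmul b (L a)

end Centralizers

theorem right_centralizers_embeddings_general
    {𝕜 : Type*} [RCLike 𝕜]
    {A : Type*} [NonUnitalNormedRing A] [NormedSpace 𝕜 A]
    [IsScalarTower 𝕜 A A] [SMulCommClass 𝕜 A A]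
    {X : Type*} [NormedAddCommGroup X] [NormedSpace 𝕜 X]
    (m : ℝ) {ι : Type*} (l : Filter ι) [l.NeBot] (e : ι → A)
    (he_bdd : ∀ i, ‖e i‖ ≤ m)
    (he_lim : ∀ a : A, Tendsto (fun i => a * e i) l (𝓝 a))
    (π : A →L[𝕜] X →L[𝕜] X)
    (hπmul : ∀ a b : A, π (a * b) = π b * π a)
    (hnd : Dense (Submodule.span 𝕜 (Set.range fun p : A × X => π p.1 p.2) : Set X))
    (C : ℝ) (hC : ∀ a : A, ‖a‖ ≤ C * ‖π a‖)
    (πbr : RightCentralizers 𝕜 A → X →L[𝕜] X)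
    (hπbr_mul : ∀ (R S : RightCentralizers 𝕜 A)
      (h : (R : A →L[𝕜] A) * S ∈ RightCentralizers 𝕜 A),
      πbr ⟨(R : A →L[𝕜] A) * S, h⟩ = πbr R * πbr S)
    (hπbr_rho : ∀ (a : A) (h : (ContinuousLinearMap.mul 𝕜 A).flip a ∈ RightCentralizers 𝕜 A),
      πbr ⟨(ContinuousLinearMap.mul 𝕜 A).flip a, h⟩ = π a) :
    (∀ (R : RightCentralizers 𝕜 A) (a : A), πbr R * π a = π ((R : A →L[𝕜] A) a)) ∧
    (∀ R S : RightCentralizers 𝕜 A, πbr R = πbr S → R = S) ∧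
    (∀ T : X →L[𝕜] X, (∀ a : A, ∃ b : A, T * π a = π b) →
      ∃ (R : A →L[𝕜] A) (hR : R ∈ RightCentralizers 𝕜 A),
        πbr ⟨R, hR⟩ = T ∧ ∀ a : A, π (R a) = T * π a) ∧
    (∀ R : RightCentralizers 𝕜 A, ‖πbr R‖ ≤ m * ‖π‖ * ‖(R : A →L[𝕜] A)‖) ∧
    (∀ R : RightCentralizers 𝕜 A, ‖(R : A →L[𝕜] A)‖ ≤ ‖π‖ * C * ‖πbr R‖) ∧
    (∀ (L R : A →L[𝕜] A) (hDC : IsDoubleCentralizer 𝕜 L R) (a : A),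
      πbr ⟨R, hDC.2.1⟩ * π a = π (R a) ∧ π a * πbr ⟨R, hDC.2.1⟩ = π (L a)) ∧
    (∀ (L₁ R₁ L₂ R₂ : A →L[𝕜] A) (hDC₁ : IsDoubleCentralizer 𝕜 L₁ R₁)
      (hDC₂ : IsDoubleCentralizer 𝕜 L₂ R₂)
      (h : (R₂ : A →L[𝕜] A) * R₁ ∈ RightCentralizers 𝕜 A),
      πbr ⟨R₂ * R₁, h⟩ = πbr ⟨R₂, hDC₂.2.1⟩ * πbr ⟨R₁, hDC₁.2.1⟩) ∧
    (∀ (L R L' R' : A →L[𝕜] A) (hDC : IsDoubleCentralizer 𝕜 L R)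
      (hDC' : IsDoubleCentralizer 𝕜 L' R'),
      πbr ⟨R, hDC.2.1⟩ = πbr ⟨R', hDC'.2.1⟩ → L = L' ∧ R = R') ∧
    (∀ T : X →L[𝕜] X,
      (∀ a : A, (∃ b : A, T * π a = π b) ∧ (∃ b : A, π a * T = π b)) →
      ∃ (L R : A →L[𝕜] A) (hDC : IsDoubleCentralizer 𝕜 L R),
        πbr ⟨R, hDC.2.1⟩ = T ∧ (∀ a : A, π (R a) = T * π a) ∧
        (∀ a : A, π (L a) = π a * T)) ∧
    (∀ (L R : A →L[𝕜] A) (hDC : IsDoubleCentralizer 𝕜 L R),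
      ‖πbr ⟨R, hDC.2.1⟩‖ ≤ m * ‖π‖ * max ‖L‖ ‖R‖ ∧
      max ‖L‖ ‖R‖ ≤ ‖π‖ * C * ‖πbr ⟨R, hDC.2.1⟩‖) := by
  have hπ := antilipschitzWith_toNNReal_of_norm_le hC
  have m_nonneg : 0 ≤ m := (norm_nonneg _).trans (he_bdd l.nonempty_of_neBot.some)
  have πbr_mul_π := mul_map_eq_map_of_extends_flip_mul hπbr_mul hπbr_rho
  have π_mul_πbr (L R : A →L[𝕜] A) (hDC : IsDoubleCentralizer 𝕜 L R) :=
    map_mul_eq_map_of_isDoubleCentralizer hπmul hnd hDC (πbr_mul_π ⟨R, hDC.2.1⟩)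
  have πbr_inj (R S : RightCentralizers 𝕜 A) (h : πbr R = πbr S) : R = S :=
    Subtype.ext <| ContinuousLinearMap.ext fun a => hπ.injective <| by simp only [← πbr_mul_π, h]
  have πbr_eq (T R) (hR : ∀ a, π (R a) = T * π a) (hRmem : R ∈ RightCentralizers 𝕜 A) :
      πbr ⟨R, hRmem⟩ = T :=
    clm_ext_of_comp_eq hnd fun a => (πbr_mul_π ⟨R, hRmem⟩ a).trans (hR a)
  have norm_πbr_le (R) := opNorm_le_of_mul_map_eq_map he_bdd he_lim hπmul hnd (πbr_mul_π R)
  have le_norm_πbr (R) := opNorm_le_of_map_eq_mul_left hC fun a => (πbr_mul_π R a).symm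
  refine ⟨πbr_mul_π, πbr_inj, fun T hT => ?_, norm_πbr_le, le_norm_πbr,
    fun L R hDC a => ⟨πbr_mul_π _ a, π_mul_πbr L R hDC a⟩,
    fun _ R₁ _ R₂ hDC₁ hDC₂ => hπbr_mul ⟨R₂, hDC₂.2.1⟩ ⟨R₁, hDC₁.2.1⟩,
    fun L R L' R' hDC hDC' h => ⟨?_, congrArg Subtype.val (πbr_inj _ _ h)⟩, fun T hT => ?_,
    fun L R hDC => ⟨(norm_πbr_le ⟨R, hDC.2.1⟩).trans (by gcongr; exact le_max_right _ _),
      max_le (opNorm_le_of_map_eq_mul_right hC fun a => (π_mul_πbr L R hDC a).symm)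
        (le_norm_πbr ⟨R, hDC.2.1⟩)⟩⟩
  · obtain ⟨R, hRmem, hR⟩ := exists_mem_rightCentralizers_map_eq_mul hπ hπmul hT
    exact ⟨R, hRmem, πbr_eq T R hR hRmem, hR⟩
  · exact ContinuousLinearMap.ext fun a => hπ.injective <| by
      rw [← π_mul_πbr L R hDC, ← π_mul_πbr L' R' hDC', h]
  · obtain ⟨L, R, hDC, hR, hL⟩ := exists_isDoubleCentralizer_map_eq_mul hπ hπmul hT
    exact ⟨L, R, hDC, πbr_eq T R hR hDC.2.1, hR, hL⟩

/-- **Right-sided embedding theorem.** Let `A` be a normed algebra with an `m`-bounded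
approximate right identity, `X` a Banach space, and `π_r : A → B(X)` an injective bounded
anti-homomorphism making `X` a non-degenerate faithful normed right `A`-module with bounded
inverse `π_r⁻¹` (bounded by `C`). Then the unique homomorphism `π̄_r : M_r(A) → B(X)` with
`π̄_r ∘ ρ = π_r` is an algebra ISOMORPHISM from `M_r(A)` onto the LEFT normalizer
`N_l(π_r(A), B(X))`, with `‖π̄_r‖ ≤ m‖π_r‖` and `‖π̄_r⁻¹‖ ≤ ‖π_r‖·‖π_r⁻¹‖`; and
`π̄_r ∘ φ_r : M(A) → B(X)`, i.e. `(L,R) ↦ π̄_r(R)`, is a bounded algebra ANTI-isomorphism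
from `M(A)` onto `N(π_r(A), B(X))`, with `‖π̄_r ∘ φ_r‖ ≤ m‖π_r‖` and
`‖(π̄_r ∘ φ_r)⁻¹‖ ≤ ‖π_r‖·‖π_r⁻¹‖` (the norms taken in `B(X)`, the norm on `M(A)` being
`max(‖L‖, ‖R‖)`). -/
theorem right_centralizers_embeddings
    {𝕜 : Type*} [RCLike 𝕜]
    {A : Type*} [NonUnitalNormedRing A] [NormedSpace 𝕜 A]
    [IsScalarTower 𝕜 A A] [SMulCommClass 𝕜 A A]
    {X : Type*} [NormedAddCommGroup X] [NormedSpace 𝕜 X] [CompleteSpace X]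
    (m : ℝ) {ι : Type*} (l : Filter ι) [l.NeBot] (e : ι → A)
    (he_bdd : ∀ i, ‖e i‖ ≤ m)
    (he_lim : ∀ a : A, Tendsto (fun i => a * e i) l (𝓝 a))
    (π : A →L[𝕜] X →L[𝕜] X)
    (hπmul : ∀ a b : A, π (a * b) = π b * π a)
    (hπinj : Function.Injective π)
    (hnd : Dense (Submodule.span 𝕜 (Set.range fun p : A × X => π p.1 p.2) : Set X))
    (C : ℝ) (hC : ∀ a : A, ‖a‖ ≤ C * ‖π a‖)
    -- `π̄_r : M_r(A) → B(X)`, the canonical homomorphism with `π̄_r ∘ ρ = π_r`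
    (πbr : RightCentralizers 𝕜 A → X →L[𝕜] X)
    (hπbr_add : ∀ (R S : RightCentralizers 𝕜 A)
      (h : (R : A →L[𝕜] A) + S ∈ RightCentralizers 𝕜 A),
      πbr ⟨(R : A →L[𝕜] A) + S, h⟩ = πbr R + πbr S)
    (hπbr_smul : ∀ (c : 𝕜) (R : RightCentralizers 𝕜 A)
      (h : c • (R : A →L[𝕜] A) ∈ RightCentralizers 𝕜 A),
      πbr ⟨c • (R : A →L[𝕜] A), h⟩ = c • πbr R)
    (hπbr_mul : ∀ (R S : RightCentralizers 𝕜 A)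
      (h : (R : A →L[𝕜] A) * S ∈ RightCentralizers 𝕜 A),
      πbr ⟨(R : A →L[𝕜] A) * S, h⟩ = πbr R * πbr S)
    (hπbr_rho : ∀ (a : A) (h : (ContinuousLinearMap.mul 𝕜 A).flip a ∈ RightCentralizers 𝕜 A),
      πbr ⟨(ContinuousLinearMap.mul 𝕜 A).flip a, h⟩ = π a) :
    -- `π̄_r` maps `M_r(A)` into the LEFT normalizer of `π_r(A)`:
    (∀ (R : RightCentralizers 𝕜 A) (a : A), πbr R * π a = π ((R : A →L[𝕜] A) a)) ∧
    -- `π̄_r` is injective,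
    (∀ R S : RightCentralizers 𝕜 A, πbr R = πbr S → R = S) ∧
    -- `π̄_r` is onto `N_l(π_r(A), B(X))`:
    (∀ T : X →L[𝕜] X, (∀ a : A, ∃ b : A, T * π a = π b) →
      ∃ (R : A →L[𝕜] A) (hR : R ∈ RightCentralizers 𝕜 A),
        πbr ⟨R, hR⟩ = T ∧ ∀ a : A, π (R a) = T * π a) ∧
    -- with `‖π̄_r‖ ≤ m ‖π_r‖` and `‖π̄_r⁻¹‖ ≤ ‖π_r‖ ‖π_r⁻¹‖`:
    (∀ R : RightCentralizers 𝕜 A, ‖πbr R‖ ≤ m * ‖π‖ * ‖(R : A →L[𝕜] A)‖) ∧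
    (∀ R : RightCentralizers 𝕜 A, ‖(R : A →L[𝕜] A)‖ ≤ ‖π‖ * C * ‖πbr R‖) ∧
    -- `π̄_r ∘ φ_r : (L,R) ↦ π̄_r(R)` maps `M(A)` into the normalizer `N(π_r(A), B(X))`,
    -- and is an anti-homomorphism of `M(A)` into `B(X)`:
    (∀ (L R : A →L[𝕜] A) (hDC : IsDoubleCentralizer 𝕜 L R) (a : A),
      πbr ⟨R, hDC.2.1⟩ * π a = π (R a) ∧ π a * πbr ⟨R, hDC.2.1⟩ = π (L a)) ∧
    (∀ (L₁ R₁ L₂ R₂ : A →L[𝕜] A) (hDC₁ : IsDoubleCentralizer 𝕜 L₁ R₁)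
      (hDC₂ : IsDoubleCentralizer 𝕜 L₂ R₂)
      (h : (R₂ : A →L[𝕜] A) * R₁ ∈ RightCentralizers 𝕜 A),
      πbr ⟨R₂ * R₁, h⟩ = πbr ⟨R₂, hDC₂.2.1⟩ * πbr ⟨R₁, hDC₁.2.1⟩) ∧
    -- it is injective on `M(A)`:
    (∀ (L R L' R' : A →L[𝕜] A) (hDC : IsDoubleCentralizer 𝕜 L R)
      (hDC' : IsDoubleCentralizer 𝕜 L' R'),
      πbr ⟨R, hDC.2.1⟩ = πbr ⟨R', hDC'.2.1⟩ → L = L' ∧ R = R') ∧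
    -- onto `N(π_r(A), B(X))`:
    (∀ T : X →L[𝕜] X,
      (∀ a : A, (∃ b : A, T * π a = π b) ∧ (∃ b : A, π a * T = π b)) →
      ∃ (L R : A →L[𝕜] A) (hDC : IsDoubleCentralizer 𝕜 L R),
        πbr ⟨R, hDC.2.1⟩ = T ∧ (∀ a : A, π (R a) = T * π a) ∧
        (∀ a : A, π (L a) = π a * T)) ∧
    -- and with the bounds `m ‖π_r‖` and `‖π_r‖ ‖π_r⁻¹‖`:
    (∀ (L R : A →L[𝕜] A) (hDC : IsDoubleCentralizer 𝕜 L R),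
      ‖πbr ⟨R, hDC.2.1⟩‖ ≤ m * ‖π‖ * max ‖L‖ ‖R‖ ∧
      max ‖L‖ ‖R‖ ≤ ‖π‖ * C * ‖πbr ⟨R, hDC.2.1⟩‖) :=
  right_centralizers_embeddings_general m l e he_bdd he_lim π hπmul hnd C hC πbr hπbr_mul hπbr_rho
end
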